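/- For any λ ∈ K^I and α ∈ ℕ^I, the ring of invariants K[μ_α^{-1}(λ)]^{G(α)} is generated, as a K-algebra, by the restrictions to μ_α^{-1}(λ) of the trace functions tr_p, where p = a_1…a_ℓ runs through the oriented cycles in the double quiver Q̄ and tr_p(x) = tr(x_{a_1}⋯x_{a_ℓ}). -/

import Mathlib

open scoped BigOperators

noncomputable section

/-- A quiver with a finite vertex set `I` and a finite arrow set `A`;
`h a` and `t a` are the head and the tail of the arrow `a`. -/
structure FinQuiver where
  I : Type
  [fintypeI : Fintype I]
  [decEqI : DecidableEq I]
  A : Type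
  [fintypeA : Fintype A]
  h : A → I
  t : A → I

attribute [instance] FinQuiver.fintypeI FinQuiver.decEqI FinQuiver.fintypeA

namespace FinQuiver

variable (Q : FinQuiver)

/-- Arrows of the double quiver `Q̄` : every arrow `a : i → j` of `Q` (as `Sum.inl a`)
together with a reverse arrow `a* : j → i` (as `Sum.inr a`). -/
@[reducible] def DA : Type := Q.A ⊕ Q.A

instance : Fintype Q.DA := inferInstanceAs (Fintype (Q.A ⊕ Q.A))

/-- Head of an arrow of the double quiver. -/
@[reducible] def dh : Q.DA → Q.I := fun a => match a with
  | Sum.inl a => Q.h a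
  | Sum.inr a => Q.t a

/-- Tail of an arrow of the double quiver. -/
@[reducible] def dt : Q.DA → Q.I := fun a => match a with
  | Sum.inl a => Q.t a
  | Sum.inr a => Q.h a

/-- The symmetric bilinear form
`(α,β) = ∑_{i∈I} 2 α_i β_i − ∑_{a∈Q̄} α_{h(a)} β_{t(a)}` on `ℤ^I`. -/
def bil (α β : Q.I → ℤ) : ℤ :=
  (∑ i, 2 * α i * β i) - ∑ a : Q.DA, α (Q.dh a) * β (Q.dt a)

/-- `p(α) = 1 − q(α) = 1 − α·α + ∑_{a ∈ Q} α_{t(a)} α_{h(a)}`. -/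
def pp (α : Q.I → ℤ) : ℤ :=
  1 - (∑ i, α i * α i) + ∑ a : Q.A, α (Q.t a) * α (Q.h a)

/-- The coordinate vector `ε_i` at a vertex `i`. -/
def ev (i : Q.I) : Q.I → ℤ := fun j => if j = i then 1 else 0

/-- The coordinate vector of a vertex, as a vector of natural numbers. -/
def evN (i : Q.I) : Q.I → ℕ := fun j => if j = i then 1 else 0

/-- A vertex is loopfree if no arrow has both its head and its tail there. -/
def Loopfree (i : Q.I) : Prop := ∀ a : Q.A, ¬ (Q.h a = i ∧ Q.t a = i)

/-- The reflection `s_i(α) = α − (α,ε_i) ε_i` at a (loopfree) vertex `i`. -/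
def refl (i : Q.I) (α : Q.I → ℤ) : Q.I → ℤ := α - Q.bil α (Q.ev i) • Q.ev i

/-- Two vertices are joined by some arrow. -/
def Adj (i j : Q.I) : Prop :=
  ∃ a : Q.A, (Q.h a = i ∧ Q.t a = j) ∨ (Q.h a = j ∧ Q.t a = i)

/-- The quiver is connected. -/
def Connected : Prop := ∀ i j : Q.I, Relation.ReflTransGen Q.Adj i j

/-- The support of the vector `α` is connected in `Q`. -/
def SuppConnected (α : Q.I → ℤ) : Prop :=
  ∀ i j : Q.I, α i ≠ 0 → α j ≠ 0 →
    Relation.ReflTransGen (fun x y => α x ≠ 0 ∧ α y ≠ 0 ∧ Q.Adj x y) i j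

/-- The fundamental region: nonzero nonnegative vectors with connected support
such that `(α, ε_i) ≤ 0` for every vertex `i`. -/
def InFund (α : Q.I → ℤ) : Prop :=
  α ≠ 0 ∧ (∀ i, 0 ≤ α i) ∧ Q.SuppConnected α ∧ ∀ i, Q.bil α (Q.ev i) ≤ 0

/-- The roots of the Kac root system attached to `Q` : the real roots form the orbit
of the simple roots (coordinate vectors at loopfree vertices) under the reflections at
loopfree vertices, and the imaginary roots form the orbit of `±(fundamental region)`
under these reflections. -/
inductive IsRoot : (Q.I → ℤ) → Prop
  | simple (i : Q.I) (hi : Q.Loopfree i) : IsRoot (Q.ev i)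
  | fund (α : Q.I → ℤ) (hα : Q.InFund α) : IsRoot α
  | neg_fund (α : Q.I → ℤ) (hα : Q.InFund α) : IsRoot (-α)
  | reflect (i : Q.I) (hi : Q.Loopfree i) (α : Q.I → ℤ) (hα : IsRoot α) :
      IsRoot (Q.refl i α)

/-- Positive roots: roots all of whose components are nonnegative. -/
def IsPosRoot (α : Q.I → ℤ) : Prop := Q.IsRoot α ∧ (∀ i, 0 ≤ α i) ∧ α ≠ 0

/-- The Tits form is positive semidefinite. -/
def PosSemidef : Prop := ∀ α : Q.I → ℤ, 0 ≤ Q.bil α α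

/-- The Tits form is positive definite. -/
def PosDef : Prop := Q.PosSemidef ∧ ∀ α : Q.I → ℤ, Q.bil α α = 0 → α = 0

/-- Dynkin quivers: connected, with positive definite Tits form. -/
def IsDynkin : Prop := Q.Connected ∧ Q.PosDef

/-- Extended Dynkin quivers: connected, with positive semidefinite but not
positive definite Tits form. -/
def IsExtDynkin : Prop := Q.Connected ∧ Q.PosSemidef ∧ ¬ Q.PosDef

/-- `δ` is the minimal positive imaginary root of an extended Dynkin quiver:
the minimal nonzero nonnegative vector in the radical of the Tits form. -/
def IsMinImag (δ : Q.I → ℤ) : Prop :=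
  (∀ i, 0 ≤ δ i) ∧ δ ≠ 0 ∧ (∀ i, Q.bil δ (Q.ev i) = 0) ∧
    ∀ β : Q.I → ℤ, (∀ i, 0 ≤ β i) → β ≠ 0 → (∀ i, Q.bil β (Q.ev i) = 0) →
      ∀ i, δ i ≤ β i

/-- The subquiver of `Q` on a subset `S` of vertices and a subset `B` of arrows. -/
def restrict (S : Set Q.I) (B : Set Q.A) (hh : ∀ a ∈ B, Q.h a ∈ S)
    (ht : ∀ a ∈ B, Q.t a ∈ S) : FinQuiver :=
  { I := S
    fintypeI := Fintype.ofFinite S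
    decEqI := Classical.decEq _
    A := B
    fintypeA := Fintype.ofFinite B
    h := fun a => ⟨Q.h a.1, hh a.1 a.2⟩
    t := fun a => ⟨Q.t a.1, ht a.1 a.2⟩ }

/-- The support quiver of a vector: the full subquiver on the support of `β`. -/
def suppQuiver (β : Q.I → ℤ) : FinQuiver :=
  Q.restrict {i | β i ≠ 0} {a | β (Q.h a) ≠ 0 ∧ β (Q.t a) ≠ 0}
    (fun _ ha => ha.1) (fun _ ha => ha.2)

/-- A dimension vector (of natural numbers), viewed in `ℤ^I`. -/
def toZ (α : Q.I → ℕ) : Q.I → ℤ := fun i => (α i : ℤ)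

/-- An oriented cycle in the double quiver `Q̄`, consisting of `n+1` arrows,
the tail of each arrow being the head of the (cyclically) next one. -/
structure Cyc (Q' : FinQuiver) where
  n : ℕ
  ar : Fin (n + 1) → Q'.DA
  compat : ∀ i : Fin (n + 1), Q'.dt (ar i) = Q'.dh (ar (i + 1))

section WithField

variable (K : Type) [Field K]

/-- `λ·α = ∑_i λ_i α_i`. -/
def pair (l : Q.I → K) (α : Q.I → ℤ) : K := ∑ i, l i * (α i : K)

/-- `R_λ^+`, the set of positive roots `α` with `λ·α = 0`. -/
def Rplus (l : Q.I → K) : Set (Q.I → ℤ) :=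
  {α | Q.IsPosRoot α ∧ Q.pair K l α = 0}

/-- `ℕ R_λ^+`, the set of sums (including the empty sum `0`) of elements of `R_λ^+`. -/
def NRplus (l : Q.I → K) : Set (Q.I → ℤ) :=
  (AddSubmonoid.closure (Q.Rplus K l) : AddSubmonoid (Q.I → ℤ))

/-- `Σ_λ` : the elements `α ∈ R_λ^+` with `p(α) > ∑ p(β⁽ᵗ⁾)` for every decomposition
of `α` as a sum of at least two elements `β⁽ᵗ⁾` of `R_λ^+`. -/
def SigmaSet (l : Q.I → K) : Set (Q.I → ℤ) :=
  {α | α ∈ Q.Rplus K l ∧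
    ∀ (n : ℕ) (β : Fin n → (Q.I → ℤ)), 2 ≤ n → (∀ j, β j ∈ Q.Rplus K l) →
      α = ∑ j, β j → (∑ j, Q.pp (β j)) < Q.pp α}

/-- The dual reflection `r_i(λ)_j = λ_j − (ε_i,ε_j) λ_i`. -/
def coRefl (i : Q.I) (l : Q.I → K) : Q.I → K :=
  fun j => l j - (Q.bil (Q.ev i) (Q.ev j) : ℤ) * l i

/-- A single admissible reflection applied to the pair `(λ, α)`:
a reflection at a loopfree vertex `i` with `λ_i ≠ 0`. -/
def AdmStep (x y : (Q.I → K) × (Q.I → ℤ)) : Prop :=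
  ∃ i : Q.I, Q.Loopfree i ∧ x.1 i ≠ 0 ∧ y.1 = Q.coRefl K i x.1 ∧ y.2 = Q.refl i x.2

/-- `(ν,β)` is obtained from `(λ,α)` by a sequence of admissible reflections:
the two pairs lie in the same class of the equivalence relation generated by
admissible reflections. -/
def AdmEquiv (x y : (Q.I → K) × (Q.I → ℤ)) : Prop :=
  Relation.EqvGen (Q.AdmStep K) x y

/-- The space `Rep(Q̄,α)` of representations of the double quiver. -/
def Rep (α : Q.I → ℕ) : Type :=
  ∀ a : Q.DA, Matrix (Fin (α (Q.dh a))) (Fin (α (Q.dt a))) K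

/-- The moment map
`μ_α(x)_i = ∑_{a∈Q, h(a)=i} x_a x_{a*} − ∑_{a∈Q, t(a)=i} x_{a*} x_a`. -/
def moment (α : Q.I → ℕ) (x : Q.Rep K α) (i : Q.I) :
    Matrix (Fin (α i)) (Fin (α i)) K :=
  (∑ a : Q.A, if h : Q.h a = i then
      (x (Sum.inl a) * x (Sum.inr a)).submatrix
        (Fin.cast (congrArg α h).symm) (Fin.cast (congrArg α h).symm)
    else 0)
  - ∑ a : Q.A, if h : Q.t a = i then
      (x (Sum.inr a) * x (Sum.inl a)).submatrix
        (Fin.cast (congrArg α h).symm) (Fin.cast (congrArg α h).symm)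
    else 0

/-- The fibre `μ_α^{-1}(λ)` of the moment map over (the central element
corresponding to) `λ`. -/
def MomentFiber (l : Q.I → K) (α : Q.I → ℕ) : Set (Q.Rep K α) :=
  {x | ∀ i : Q.I, Q.moment K α x i = l i • (1 : Matrix (Fin (α i)) (Fin (α i)) K)}

/-- The group `∏_i GL(α_i,K)`; it acts on `Rep(Q̄,α)` by conjugation, with the same
orbits and the same invariant functions as `G(α) = (∏_i GL(α_i,K))/K^*`. -/
def Gl (α : Q.I → ℕ) : Type := ∀ i : Q.I, Matrix.GeneralLinearGroup (Fin (α i)) K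

/-- The conjugation action of `∏_i GL(α_i,K)` on `Rep(Q̄,α)`. -/
def glAct (α : Q.I → ℕ) (g : Q.Gl K α) (x : Q.Rep K α) : Q.Rep K α :=
  fun a => (g (Q.dh a) : Matrix (Fin (α (Q.dh a))) (Fin (α (Q.dh a))) K) * x a *
    (((g (Q.dt a))⁻¹ : Matrix.GeneralLinearGroup (Fin (α (Q.dt a))) K) :
      Matrix (Fin (α (Q.dt a))) (Fin (α (Q.dt a))) K)

/-- Coordinates on `Rep(Q̄,α)`: matrix entries. -/
def Coords (α : Q.I → ℕ) : Type :=
  Σ a : Q.DA, Fin (α (Q.dh a)) × Fin (α (Q.dt a))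

/-- The coordinate ring `K[V]` of a subset `V` of `Rep(Q̄,α)` : the algebra of
`K`-valued functions on `V` which are restrictions of polynomial functions. -/
def fnRing (α : Q.I → ℕ) (V : Set (Q.Rep K α)) : Subalgebra K (↥V → K) :=
  (MvPolynomial.aeval
    (fun c : Q.Coords α => fun v : ↥V => v.1 c.1 c.2.1 c.2.2) :
    MvPolynomial (Q.Coords α) K →ₐ[K] (↥V → K)).range

end WithField

end FinQuiver

/-- The subalgebra of functions invariant under a relation (e.g. the orbit
relation of a group action). -/
def relInv (K : Type) [Field K] {V : Type} (R : V → V → Prop) :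
    Subalgebra K (V → K) where
  carrier := {f | ∀ x y : V, R x y → f x = f y}
  mul_mem' := by
    intro f g hf hg x y hxy
    simp only [Pi.mul_apply, hf x y hxy, hg x y hxy]
  one_mem' := fun x y _ => rfl
  add_mem' := by
    intro f g hf hg x y hxy
    simp only [Pi.add_apply, hf x y hxy, hg x y hxy]
  zero_mem' := fun x y _ => rfl
  algebraMap_mem' := fun c x y _ => rfl

namespace FinQuiver

variable (Q : FinQuiver) (K : Type) [Field K]

/-- The coordinate ring of the Marsden–Weinstein reduction
`N(λ,α) = μ_α^{-1}(λ) ⫽ G(α)` : the `G(α)`-invariant functions in the coordinate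
ring of `μ_α^{-1}(λ)`.  Two such reductions are isomorphic as (affine) varieties
exactly when these `K`-algebras are isomorphic. -/
def InvRing (l : Q.I → K) (α : Q.I → ℕ) :
    Subalgebra K (↥(Q.MomentFiber K l α) → K) :=
  Q.fnRing K α (Q.MomentFiber K l α) ⊓
    relInv K (fun x y : ↥(Q.MomentFiber K l α) =>
      ∃ g : Q.Gl K α, y.1 = Q.glAct K α g x.1)

/-- Index type for a product `∏_t X_t^{m_t}`. -/
@[reducible] def SymIdx (s : ℕ) (m : Fin s → ℕ) : Type := Σ t : Fin s, Fin (m t)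

/-- The product `∏_{t} Rep(Q̄, d_t)^{m_t}` of representation spaces. -/
def SymRep (s : ℕ) (m : Fin s → ℕ) (d : Fin s → (Q.I → ℕ)) : Type :=
  ∀ p : SymIdx s m, Q.Rep K (d p.1)

/-- The product `∏_t μ_{d_t}^{-1}(λ)^{m_t}` of moment map fibres. -/
def SymFiber (s : ℕ) (m : Fin s → ℕ) (d : Fin s → (Q.I → ℕ)) (l : Q.I → K) :
    Set (Q.SymRep K s m d) :=
  {x | ∀ p : SymIdx s m, x p ∈ Q.MomentFiber K l (d p.1)}

/-- Polynomial functions on the product of fibres. -/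
def symFnRing (s : ℕ) (m : Fin s → ℕ) (d : Fin s → (Q.I → ℕ)) (l : Q.I → K) :
    Subalgebra K (↥(Q.SymFiber K s m d l) → K) :=
  (MvPolynomial.aeval
    (fun c : Σ p : SymIdx s m, Q.Coords (d p.1) =>
      fun v : ↥(Q.SymFiber K s m d l) => v.1 c.1 c.2.1 c.2.2.1 c.2.2.2) :
    MvPolynomial (Σ p : SymIdx s m, Q.Coords (d p.1)) K →ₐ[K]
      (↥(Q.SymFiber K s m d l) → K)).range

/-- The componentwise action of the product of the groups `∏ GL(d_t)^{m_t}`. -/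
def symGlAct (s : ℕ) (m : Fin s → ℕ) (d : Fin s → (Q.I → ℕ))
    (g : ∀ p : SymIdx s m, Q.Gl K (d p.1)) (x : Q.SymRep K s m d) :
    Q.SymRep K s m d :=
  fun p => Q.glAct K (d p.1) (g p) (x p)

/-- The action of `∏_t S_{m_t}` permuting the factors of each `X_t^{m_t}`. -/
def symPermAct (s : ℕ) (m : Fin s → ℕ) (d : Fin s → (Q.I → ℕ))
    (π : ∀ t : Fin s, Equiv.Perm (Fin (m t))) (x : Q.SymRep K s m d) :
    Q.SymRep K s m d :=
  fun p => x ⟨p.1, π p.1 p.2⟩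

/-- The coordinate ring of the product of symmetric products
`∏_t S^{m_t} N(λ, d_t)` of Marsden–Weinstein reductions: functions on
`∏_t μ_{d_t}^{-1}(λ)^{m_t}` which are polynomial, invariant under all the groups
`G(d_t)` acting on the separate factors, and symmetric under permutations of the
`m_t` factors of each type `t`. -/
def SymInvRing (s : ℕ) (m : Fin s → ℕ) (d : Fin s → (Q.I → ℕ)) (l : Q.I → K) :
    Subalgebra K (↥(Q.SymFiber K s m d l) → K) :=
  Q.symFnRing K s m d l ⊓
    relInv K (fun x y : ↥(Q.SymFiber K s m d l) =>
      ∃ g : ∀ p : SymIdx s m, Q.Gl K (d p.1), y.1 = Q.symGlAct K s m d g x.1) ⊓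
    relInv K (fun x y : ↥(Q.SymFiber K s m d l) =>
      ∃ π : ∀ t : Fin s, Equiv.Perm (Fin (m t)), y.1 = Q.symPermAct K s m d π x.1)

/-- The trace function `tr_p` of an oriented cycle `p` in `Q̄` :
`tr_p(x) = tr(x_{a_1} ⋯ x_{a_ℓ})`, written out via matrix entries. -/
def cycTr (α : Q.I → ℕ) (p : Q.Cyc) (x : Q.Rep K α) : K :=
  ∑ c : ∀ i : Fin (p.n + 1), Fin (α (Q.dh (p.ar i))),
    ∏ i : Fin (p.n + 1),
      x (p.ar i) (c i) (Fin.cast (congrArg α (p.compat i)).symm (c (i + 1)))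

/-- `U` is a subrepresentation of the `Π^λ`-module given by the point
`x ∈ Rep(Q̄,α)` : a collection of subspaces stable under all the maps `x_a`. -/
def SubRep (α : Q.I → ℕ) (x : Q.Rep K α)
    (U : ∀ i : Q.I, Submodule K (Fin (α i) → K)) : Prop :=
  ∀ a : Q.DA, ∀ v ∈ U (Q.dt a), (x a).mulVec v ∈ U (Q.dh a)

/-- The module given by `x` has the simple module `S_{i₀}` (dimension vector
`ε_{i₀}`, all arrows acting as zero) as a composition factor: it has a subquotient
of dimension vector `ε_{i₀}` on which all arrows act as zero. -/
def HasSFactor (α : Q.I → ℕ) (i0 : Q.I) (x : Q.Rep K α) : Prop :=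
  ∃ U W : ∀ i : Q.I, Submodule K (Fin (α i) → K),
    Q.SubRep K α x U ∧ Q.SubRep K α x W ∧ (∀ i, U i ≤ W i) ∧
    (∀ i, Module.finrank K (W i) =
      Module.finrank K (U i) + (if i = i0 then 1 else 0)) ∧
    (∀ a : Q.DA, Q.dh a = i0 → Q.dt a = i0 →
      ∀ v ∈ W (Q.dt a), (x a).mulVec v ∈ U (Q.dh a))

/-- `W/U` is a simple subquotient of the module given by `x`; the simple
subquotients of a module are, up to isomorphism, exactly its composition factors. -/
def SimpleSubquot (α : Q.I → ℕ) (x : Q.Rep K α)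
    (U W : ∀ i : Q.I, Submodule K (Fin (α i) → K)) : Prop :=
  Q.SubRep K α x U ∧ Q.SubRep K α x W ∧ (∀ i, U i ≤ W i) ∧ U ≠ W ∧
    ∀ V : ∀ i : Q.I, Submodule K (Fin (α i) → K),
      Q.SubRep K α x V → (∀ i, U i ≤ V i) → (∀ i, V i ≤ W i) → V = U ∨ V = W

/-- The direct sum map `∏_{j=1}^m Rep(Q̄,δ) → Rep(Q̄,mδ)` (block diagonal). -/
def dsMap (δ : Q.I → ℕ) (m : ℕ) (y : Fin m → Q.Rep K δ) :
    Q.Rep K (fun i => m * δ i) :=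
  fun a => Matrix.of fun r c =>
    if (finProdFinEquiv.symm r).1 = (finProdFinEquiv.symm c).1 then
      y (finProdFinEquiv.symm r).1 a (finProdFinEquiv.symm r).2
        (finProdFinEquiv.symm c).2
    else 0

end FinQuiver

/-!
Write a polynomial invariant as a `K`-combination of words in the coordinates. Each word is the
contraction `tr (D ⨂ₖ xₖ)` of a matrix unit `D` against the maps `xₖ` of the representation, and
conjugating `D` by a rational point of `∏ᵢ GL (α i)` amounts to moving the representation. Since
this group of rational points is closed under transposition and the form `∑ tr (CᵀD)` is
anisotropic over `ℚ`, the kernel of the contraction map has an invariant orthogonal complement, so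
the rational matrices may be chosen to commute with the group. By Schur–Weyl duality they are then
combinations of place permutations of words of vertices, and contracting such a permutation gives
the product over its cycles of the traces of the `xₖ` along the cycle.
-/

namespace InvariantTheory

open Matrix

section Anisotropic

variable {F V : Type*} [Field F] [AddCommGroup V] [Module F V] {B : LinearMap.BilinForm F V}

theorem isCompl_orthogonal_of_anisotropic [FiniteDimensional F V] (hB : B.IsRefl)
    (hB₀ : ∀ v, B v v = 0 → v = 0) (N : Submodule F V) : IsCompl N (B.orthogonal N) :=
  (LinearMap.BilinForm.isCompl_orthogonal_iff_disjoint hB).2 <|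
    Submodule.disjoint_def.2 fun v hv hv' => hB₀ v (hv' v hv)

theorem mem_orthogonal_of_isAdjointPair {f f' : Module.End F V}
    (hf : LinearMap.IsAdjointPair B B f' f) {N : Submodule F V} (hN : ∀ v ∈ N, f' v ∈ N)
    {v : V} (hv : v ∈ B.orthogonal N) : f v ∈ B.orthogonal N := fun n hn =>
  (hf n v).symm.trans (hv _ (hN n hn))

theorem exists_fixed_lift [FiniteDimensional F V] {G W : Type*} [AddCommGroup W] [Module F W]
    (hB : B.IsRefl) (hB₀ : ∀ v, B v v = 0 → v = 0) (ρ : G → Module.End F V)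
    (hρ : ∀ g, ∃ g', LinearMap.IsAdjointPair B B (ρ g') (ρ g)) (Φ : V →ₗ[F] W)
    (hker : ∀ g, ∀ v ∈ LinearMap.ker Φ, ρ g v ∈ LinearMap.ker Φ)
    {v : V} (hv : ∀ g, Φ (ρ g v) = Φ v) : ∃ w, Φ w = Φ v ∧ ∀ g, ρ g w = w := by
  have hcompl := isCompl_orthogonal_of_anisotropic hB hB₀ (LinearMap.ker Φ)
  obtain ⟨n, hn, w, hw, rfl⟩ : ∃ n ∈ LinearMap.ker Φ, ∃ w ∈ B.orthogonal (LinearMap.ker Φ),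
      n + w = v := Submodule.mem_sup.1 (hcompl.sup_eq_top ▸ Submodule.mem_top)
  have hΦw : Φ (n + w) = Φ w := by rw [map_add, LinearMap.mem_ker.1 hn, zero_add]
  refine ⟨w, hΦw.symm, fun g => sub_eq_zero.1 <|
    Submodule.disjoint_def.1 hcompl.disjoint _ ?_ (sub_mem ?_ hw)⟩
  · have hρn : Φ (ρ g n) = 0 := hker g n hn
    have hρw := hv g
    rw [hΦw, map_add, map_add, hρn, zero_add] at hρw
    rw [LinearMap.mem_ker, map_sub, hρw, sub_self]
  · obtain ⟨g', hg'⟩ := hρ g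
    exact mem_orthogonal_of_isAdjointPair hg' (hker g') hw

end Anisotropic

section TransposeClosed

variable {F : Type*} [Field F] [LinearOrder F] [IsStrictOrderedRing F]

open scoped Matrix.Module in
theorem isSemisimpleModule_of_transpose_mem {n : Type*} [Fintype n] [DecidableEq n]
    {A : Subalgebra F (Matrix n n F)} (hA : ∀ a ∈ A, aᵀ ∈ A) : IsSemisimpleModule A (n → F) := by
  let B : LinearMap.BilinForm F (n → F) := dotProductBilin F F
  have hB : B.IsRefl := fun v w h => (dotProduct_comm w v).trans h
  have hadj (a : Matrix n n F) : LinearMap.IsAdjointPair B B aᵀ.mulVecLin a.mulVecLin :=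
    fun v w => by simp [B, dotProductBilin, dotProduct_mulVec]
  refine (isSemisimpleModule_iff _ _).2 ⟨fun N => ?_⟩
  have hN (a : A) : ∀ v ∈ N.restrictScalars F, a.1.mulVecLin v ∈ N.restrictScalars F :=
    fun v hv => N.smul_mem a hv
  let N' : Submodule A (n → F) :=
    { B.orthogonal (N.restrictScalars F) with
      smul_mem' := fun a _ hv =>
        mem_orthogonal_of_isAdjointPair (hadj a) (hN ⟨_, hA a a.2⟩) hv }
  have h := isCompl_orthogonal_of_anisotropic hB (fun v => dotProduct_self_eq_zero.1)
    (N.restrictScalars F)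
  refine ⟨N', Submodule.disjoint_def.2 fun v => Submodule.disjoint_def.1 h.disjoint v,
    Submodule.codisjoint_iff_exists_add_eq.2 fun v => ?_⟩
  exact Submodule.codisjoint_iff_exists_add_eq.1 h.codisjoint v

open scoped Matrix.Module in
theorem centralizer_centralizer_le_of_transpose_mem {n : Type*} [Fintype n] [DecidableEq n]
    {A : Subalgebra F (Matrix n n F)} (hA : ∀ a ∈ A, aᵀ ∈ A) :
    Subalgebra.centralizer F (Subalgebra.centralizer F (A : Set (Matrix n n F)) : Set _) ≤ A := by
  intro C hC
  have := isSemisimpleModule_of_transpose_mem hA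
  have hcomm (e : Module.End A (n → F)) (v : n → F) : C *ᵥ e v = e (C *ᵥ v) := by
    let E := LinearMap.toMatrix' (e.restrictScalars F)
    have hE (w : n → F) : E *ᵥ w = e w := LinearMap.toMatrix'_mulVec (e.restrictScalars F) w
    have hEA : E ∈ Subalgebra.centralizer F (A : Set (Matrix n n F)) := fun a ha =>
      Matrix.ext_of_mulVec_single fun j => by
        rw [← mulVec_mulVec, ← mulVec_mulVec, hE, hE]
        exact (e.map_smul ⟨a, ha⟩ _).symm
    rw [← hE, ← hE, mulVec_mulVec, mulVec_mulVec, hC E hEA]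
  let f : Module.End (Module.End A (n → F)) (n → F) :=
    { toFun := (C *ᵥ ·), map_add' := mulVec_add C, map_smul' := hcomm }
  obtain ⟨a, ha⟩ := jacobson_density f (Finset.univ.image fun j : n => Pi.single j (1 : F))
  suffices C = a from this ▸ a.2
  refine Matrix.ext_of_mulVec_single fun j => ?_
  exact ha _ (Finset.mem_image_of_mem _ (Finset.mem_univ j))

end TransposeClosed

section TensorProd

variable {κ T R : Type*} [Fintype κ]

/-- The Kronecker product `⨂ₖ X k` of a family of square matrices, with rows and columns indexed
by words `κ → T`. -/
def tensorProd [CommMonoid R] (X : κ → Matrix T T R) : Matrix (κ → T) (κ → T) R :=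
  of fun p q => ∏ k, X k (p k) (q k)

@[simp]
theorem tensorProd_apply [CommMonoid R] (X : κ → Matrix T T R) (p q : κ → T) :
    tensorProd X p q = ∏ k, X k (p k) (q k) := rfl

theorem tensorProd_transpose [CommMonoid R] (X : κ → Matrix T T R) :
    tensorProd (fun k => (X k)ᵀ) = (tensorProd X)ᵀ := rfl

variable [CommSemiring R]

theorem tensorProd_map {S : Type*} [CommSemiring S] (f : R →+* S) (X : κ → Matrix T T R) :
    (tensorProd X).map f = tensorProd fun k => (X k).map f := by
  ext p q
  simp only [map_apply, tensorProd_apply, map_prod]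

theorem tensorProd_one [DecidableEq T] : tensorProd (1 : κ → Matrix T T R) = 1 := by
  ext p q
  simp only [tensorProd_apply, Pi.one_apply, one_apply, Fintype.prod_boole, funext_iff]

variable [Fintype T]

theorem tensorProd_mul [DecidableEq κ] (X Y : κ → Matrix T T R) :
    tensorProd (X * Y) = tensorProd X * tensorProd Y := by
  ext p q
  simp only [tensorProd_apply, Pi.mul_apply, mul_apply, Finset.prod_univ_sum,
    Fintype.piFinset_univ, Finset.prod_mul_distrib]

/-- The tensor power `X ↦ X^{⊗κ}`. -/
@[simps]
def tensorPow (κ : Type*) [Fintype κ] [DecidableEq κ] [DecidableEq T] :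
    Matrix T T R →* Matrix (κ → T) (κ → T) R where
  toFun X := tensorProd fun _ => X
  map_one' := tensorProd_one
  map_mul' _ _ := tensorProd_mul _ _

end TensorProd

section Contraction

variable {κ T R : Type*} [CommSemiring R]

/-- The trace of `⨂ₖ Y k` against the permutation operator of `σ`. It is the product over the
cycles of `σ` of the traces of the products of the `Y k` along the cycle. -/
def permTrace [Fintype κ] [DecidableEq κ] [Fintype T] (σ : Equiv.Perm κ)
    (Y : κ → Matrix T T R) : R :=
  ∑ q : κ → T, ∏ k, Y k (q (σ k)) (q k)

variable [Fintype κ] [DecidableEq κ] [Fintype T]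

theorem permTrace_permCongr {κ' : Type*} [Fintype κ'] [DecidableEq κ'] (e : κ ≃ κ')
    (σ : Equiv.Perm κ) (Y : κ' → Matrix T T R) :
    permTrace (e.permCongr σ) Y = permTrace σ (Y ∘ e) := by
  refine (Fintype.sum_equiv (e.arrowCongr (Equiv.refl T)) _ _ fun q => ?_).symm
  exact Fintype.prod_equiv e _ _ fun k => by simp

theorem sum_option_pi (f : (Option κ → T) → R) :
    ∑ q, f q = ∑ q : κ → T, ∑ t, f fun o => o.elim t q := by
  rw [← Fintype.sum_prod_type']
  refine Fintype.sum_equiv ((Equiv.piOptionEquivProd (β := fun _ => T)).trans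
    (Equiv.prodComm _ _)) _ _ fun q => congrArg f ?_
  ext o
  cases o <;> rfl

theorem permTrace_decomposeOption_none (τ : Equiv.Perm κ) (Y : Option κ → Matrix T T R) :
    permTrace (Equiv.Perm.decomposeOption.symm (none, τ)) Y =
      (Y none).trace * permTrace τ (Y ∘ some) := by
  rw [permTrace, sum_option_pi, permTrace, Finset.mul_sum]
  refine Finset.sum_congr rfl fun q _ => ?_
  simp [Fintype.prod_option, Matrix.trace, Finset.sum_mul]

theorem permTrace_decomposeOption_some (j : κ) (τ : Equiv.Perm κ)
    (Y : Option κ → Matrix T T R) :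
    permTrace (Equiv.Perm.decomposeOption.symm (some j, τ)) Y =
      permTrace τ (Function.update (Y ∘ some) (τ.symm j) (Y none * Y (some (τ.symm j)))) := by
  set i := τ.symm j
  have hij : τ i = j := τ.apply_symm_apply j
  rw [permTrace, sum_option_pi, permTrace]
  refine Finset.sum_congr rfl fun q _ => ?_
  rw [← Finset.mul_prod_erase _ _ (Finset.mem_univ i), Function.update_self, mul_apply,
    Finset.sum_mul]
  refine Finset.sum_congr rfl fun t _ => ?_
  rw [Fintype.prod_option, ← Finset.mul_prod_erase _ _ (Finset.mem_univ i), ← mul_assoc]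
  refine congrArg₂ _ (by simp [hij]) (Finset.prod_congr rfl fun k hk => ?_)
  have hki : k ≠ i := Finset.ne_of_mem_erase hk
  have hkj : τ k ≠ j := fun h => hki (τ.injective (h.trans hij.symm))
  simp [Function.update_of_ne hki, Equiv.swap_apply_of_ne_of_ne, hkj]

theorem permTrace_mem {S : Submonoid R} {M : Subsemigroup (Matrix T T R)}
    (hM : ∀ X ∈ M, X.trace ∈ S) (σ : Equiv.Perm κ) {Y : κ → Matrix T T R} (hY : ∀ k, Y k ∈ M) :
    permTrace σ Y ∈ S := by
  refine Fintype.induction_empty_option (P := fun κ _ => ∀ [DecidableEq κ] (σ : Equiv.Perm κ)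
    (Y : κ → Matrix T T R), (∀ k, Y k ∈ M) → permTrace σ Y ∈ S) ?_ ?_ ?_ κ σ Y hY
  · intro κ κ' _ e ih _ σ Y hY
    let _ := Fintype.ofEquiv κ' e.symm
    classical
    obtain ⟨τ, rfl⟩ := e.permCongr.surjective σ
    rw [permTrace_permCongr]
    exact ih τ _ fun k => hY (e k)
  · intro _ σ Y _
    simp [permTrace]
  · intro κ _ ih dec σ Y hY
    classical
    obtain rfl : dec = Option.instDecidableEq := Subsingleton.elim _ _
    obtain ⟨⟨_ | j, τ⟩, rfl⟩ := Equiv.Perm.decomposeOption.symm.surjective σ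
    · rw [permTrace_decomposeOption_none]
      exact mul_mem (hM _ (hY none)) (ih τ _ fun k => hY (some k))
    · rw [permTrace_decomposeOption_some]
      refine ih τ _ <| (Function.forall_update_iff _ fun _ X => X ∈ M).2
        ⟨mul_mem (hY _) (hY _), fun k _ => hY (some k)⟩

end Contraction

section Polarization

open MvPolynomial
variable {F κ X : Type*} [Field F] [Fintype κ]

theorem exists_perm_of_sum_single_eq {u v : κ → X}
    (h : ∑ k, Finsupp.single (u k) 1 = (∑ k, Finsupp.single (v k) 1 : X →₀ ℕ)) :
    ∃ σ : Equiv.Perm κ, v ∘ σ = u := by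
  classical
  have hcard (x : X) : Fintype.card {k // u k = x} = Fintype.card {k // v k = x} := by
    simpa [Finsupp.finsetSum_apply, Finsupp.single_apply, Fintype.card_subtype] using
      DFunLike.congr_fun h x
  exact ⟨Equiv.ofFiberEquiv fun x => Fintype.equivOfCardEq (hcard x),
    funext (Equiv.ofFiberEquiv_map _)⟩

/-- A function `b` of words that does not depend on the order of the letters factors through the
monomial `∏ₖ X (u k)`; so applying the corresponding functional to the polynomial
`∑ᵤ c u ∏ₖ X (u k)` gives `∑ᵤ c u * b u`. -/
theorem sum_mul_eq_zero_of_symmetric [DecidableEq κ] [Fintype X] {D : Set (X → F)}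
    (hD : ∀ P : MvPolynomial X F, (∀ x ∈ D, eval x P = 0) → P = 0) {b c : (κ → X) → F}
    (hb : ∀ u, ∀ σ : Equiv.Perm κ, b (u ∘ σ) = b u)
    (hc : ∀ x ∈ D, ∑ u, c u * ∏ k, x (u k) = 0) : ∑ u, c u * b u = 0 := by
  let mon (u : κ → X) : X →₀ ℕ := ∑ k, Finsupp.single (u k) 1
  have hmon (u : κ → X) : monomial (mon u) 1 = ∏ k, (MvPolynomial.X (u k) : MvPolynomial X F) :=
    monomial_sum_one _ _
  have hfac : b.FactorsThrough mon := fun u v huv => by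
    obtain ⟨σ, rfl⟩ := exists_perm_of_sum_single_eq huv
    exact hb v σ
  let ℓ : MvPolynomial X F →ₗ[F] F := (basisMonomials X F).constr F (Function.extend mon b 0)
  have hℓ (u : κ → X) : ℓ (monomial (mon u) 1) = b u := by
    rw [← hfac.extend_apply 0 u, ← (basisMonomials X F).constr_basis F (Function.extend mon b 0),
      coe_basisMonomials]
  have hP : ∑ u, c u • monomial (mon u) (1 : F) = 0 := hD _ fun x hx => by
    simpa [hmon, smul_eval, eval_prod] using hc x hx
  simpa [hℓ] using congrArg ℓ hP

/-- After multiplication by the product of the generic determinants, `P` vanishes everywhere. -/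
theorem eq_zero_of_eval_GL_eq_zero [Infinite F] {I : Type*} [Finite I] {n : I → Type*}
    [∀ i, Fintype (n i)] [∀ i, DecidableEq (n i)] {P : MvPolynomial (Σ i, n i × n i) F}
    (hP : ∀ g : ∀ i, GL (n i) F, eval (fun s => (g s.1).1 s.2.1 s.2.2) P = 0) : P = 0 := by
  cases nonempty_fintype I
  let d (i : I) : MvPolynomial (Σ i, n i × n i) F :=
    rename (Sigma.mk i) (mvPolynomialX (n i) (n i) F).det
  have hd : ∏ i, d i ≠ 0 := Finset.prod_ne_zero_iff.2 fun i _ =>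
    (map_ne_zero_iff _ (rename_injective _ sigma_mk_injective)).2 (det_mvPolynomialX_ne_zero _ _)
  refine (mul_eq_zero.1 <| MvPolynomial.funext fun x => ?_).resolve_right hd
  let M (i : I) : Matrix (n i) (n i) F := of fun r s => x ⟨i, r, s⟩
  have hdet (i : I) : eval x (d i) = (M i).det := by
    rw [eval_rename]
    exact eval_det_mvPolynomialX _ _ _
  rw [map_mul, map_prod, map_zero]
  by_cases h : ∀ i, (M i).det ≠ 0
  · have := hP fun i => GeneralLinearGroup.mkOfDetNeZero (M i) (h i)
    rw [show eval x P = 0 from this, zero_mul]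
  · push Not at h
    obtain ⟨i, hi⟩ := h
    rw [Finset.prod_eq_zero (Finset.mem_univ i) ((hdet i).trans hi), mul_zero]

end Polarization

section SchurWeyl

/-- Matrices with rows and columns indexed by the words of shape `κ` in the letters `⟨i, r⟩`, which
are coloured by `i`: the endomorphisms of `(⨁ᵢ R^(n i))^{⊗κ}`. -/
abbrev WordMatrix {I : Type*} (κ : Type*) (n : I → Type*) (R : Type*) :=
  Matrix (κ → Σ i, n i) (κ → Σ i, n i) R

variable {κ I : Type*} {n : I → Type*} {R : Type*} [Fintype κ] [DecidableEq I]

/-- The operator that selects the words of colour `c` and permutes their letters by `σ`. -/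
def colorPerm [∀ i, DecidableEq (n i)] [Zero R] [One R] (σ : Equiv.Perm κ) (c : κ → I) :
    WordMatrix κ n R :=
  of fun p q => if q = p ∘ σ ∧ Sigma.fst ∘ p = c then 1 else 0

variable [∀ i, DecidableEq (n i)]

theorem colorPerm_transpose [Zero R] [One R] (σ : Equiv.Perm κ) (c : κ → I) :
    (colorPerm σ c : WordMatrix κ n R)ᵀ = colorPerm σ⁻¹ (c ∘ σ) := by
  ext p q
  have hpq : q = p ∘ ⇑σ⁻¹ ↔ p = q ∘ σ := (σ.eq_comp_symm q p).trans eq_comm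
  simp only [transpose_apply, colorPerm, of_apply, hpq]
  refine if_congr (and_congr_right fun h => ?_) rfl rfl
  rw [h, ← Function.comp_assoc, σ.surjective.injective_comp_right.eq_iff]

variable [DecidableEq κ] [Fintype I]

theorem sum_colorPerm_one [CommSemiring R] :
    ∑ c : κ → I, (colorPerm 1 c : WordMatrix κ n R) = 1 := by
  ext p q
  simp [colorPerm, Matrix.sum_apply, one_apply, ite_and, eq_comm]

variable [∀ i, Fintype (n i)]

section CommSemiring

variable [CommSemiring R]

theorem colorPerm_mul_apply (σ : Equiv.Perm κ) (c : κ → I) (M : WordMatrix κ n R)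
    (p q : κ → Σ i, n i) :
    (colorPerm σ c * M : WordMatrix κ n R) p q = if Sigma.fst ∘ p = c then M (p ∘ σ) q else 0 := by
  simp [mul_apply, colorPerm, ite_and]

theorem mul_colorPerm_apply_comp (σ : Equiv.Perm κ) (c : κ → I) (M : WordMatrix κ n R)
    (p q : κ → Σ i, n i) :
    (M * colorPerm σ c : WordMatrix κ n R) p (q ∘ σ) =
      if Sigma.fst ∘ q = c then M p q else 0 := by
  simp [mul_apply, colorPerm, ite_and, σ.surjective.injective_comp_right.eq_iff]

theorem colorPerm_mul_colorPerm (σ τ : Equiv.Perm κ) (c d : κ → I) :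
    (colorPerm σ c * colorPerm τ d : WordMatrix κ n R) =
      if d = c ∘ σ then colorPerm (σ * τ) c else 0 := by
  ext p q
  rw [colorPerm_mul_apply]
  by_cases hp : Sigma.fst ∘ p = c
  · subst hp
    by_cases hd : d = (Sigma.fst ∘ p) ∘ σ
    · subst hd
      simp [colorPerm, Function.comp_assoc]
    · simp [colorPerm, hd, ← Function.comp_assoc, Ne.symm hd]
  · split_ifs <;> simp [colorPerm, hp]

theorem trace_colorPerm_mul_tensorProd (σ : Equiv.Perm κ) (c : κ → I)
    (Y : κ → Matrix (Σ i, n i) (Σ i, n i) R) :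
    (colorPerm σ c * tensorProd Y : WordMatrix κ n R).trace =
      ∑ p : κ → Σ i, n i, if Sigma.fst ∘ p = c then ∏ k, Y k (p (σ k)) (p k) else 0 := by
  simp only [trace, diag_apply, colorPerm_mul_apply, tensorProd_apply, Function.comp_apply]

variable (κ n R) in
/-- The algebra spanned by the operators `colorPerm σ c`. -/
def colorPermAlgebra : Subalgebra R (WordMatrix κ n R) :=
  (Submodule.span R
    (Set.range fun x : Equiv.Perm κ × (κ → I) =>
      (colorPerm x.1 x.2 : WordMatrix κ n R))).toSubalgebra
    (by
      rw [← sum_colorPerm_one]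
      exact sum_mem fun c _ => Submodule.subset_span ⟨(1, c), rfl⟩)
    fun a b ha hb => by
      have hab := Submodule.mul_mem_mul ha hb
      rw [Submodule.span_mul_span] at hab
      refine Submodule.span_le.2 ?_ hab
      rintro _ ⟨_, ⟨⟨σ, c⟩, rfl⟩, _, ⟨⟨τ, d⟩, rfl⟩, rfl⟩
      dsimp only
      rw [colorPerm_mul_colorPerm]
      split_ifs
      · exact Submodule.subset_span ⟨(σ * τ, c), rfl⟩
      · exact zero_mem _

theorem colorPerm_mem_colorPermAlgebra (σ : Equiv.Perm κ) (c : κ → I) :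
    colorPerm σ c ∈ colorPermAlgebra κ n R :=
  Submodule.subset_span ⟨(σ, c), rfl⟩

theorem colorPermAlgebra_le {N : Submodule R (WordMatrix κ n R)}
    (hN : ∀ σ c, colorPerm σ c ∈ N) : Subalgebra.toSubmodule (colorPermAlgebra κ n R) ≤ N :=
  Submodule.span_le.2 <| Set.range_subset_iff.2 fun x => hN x.1 x.2

theorem transpose_mem_colorPermAlgebra {a : WordMatrix κ n R}
    (ha : a ∈ colorPermAlgebra κ n R) : aᵀ ∈ colorPermAlgebra κ n R := by
  let N := (Subalgebra.toSubmodule (colorPermAlgebra κ n R)).comap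
    (transposeLinearEquiv (κ → Σ i, n i) (κ → Σ i, n i) R R).toLinearMap
  have hN : ∀ σ c, colorPerm σ c ∈ N := fun σ c => by
    change (colorPerm σ c)ᵀ ∈ colorPermAlgebra κ n R
    rw [colorPerm_transpose]
    exact colorPerm_mem_colorPermAlgebra _ _
  exact colorPermAlgebra_le hN ha

theorem apply_eq_zero_of_commute_colorPermAlgebra {b : WordMatrix κ n R}
    (hb : ∀ a ∈ colorPermAlgebra κ n R, Commute a b) {p q : κ → Σ i, n i}
    (hpq : Sigma.fst ∘ p ≠ Sigma.fst ∘ q) : b p q = 0 := by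
  have h := congrFun₂ (hb _ (colorPerm_mem_colorPermAlgebra 1 (Sigma.fst ∘ p))) p
    (q ∘ (1 : Equiv.Perm κ))
  rwa [colorPerm_mul_apply, mul_colorPerm_apply_comp, if_pos rfl, if_neg hpq.symm] at h

theorem apply_comp_of_commute_colorPermAlgebra {b : WordMatrix κ n R}
    (hb : ∀ a ∈ colorPermAlgebra κ n R, Commute a b) (σ : Equiv.Perm κ) {p q : κ → Σ i, n i}
    (hpq : Sigma.fst ∘ p = Sigma.fst ∘ q) : b (p ∘ σ) (q ∘ σ) = b p q := by
  have h := congrFun₂ (hb _ (colorPerm_mem_colorPermAlgebra σ (Sigma.fst ∘ p))) p (q ∘ σ)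
  rwa [colorPerm_mul_apply, mul_colorPerm_apply_comp, if_pos rfl, if_pos hpq.symm] at h

/-- The words `u` in the letters `Σ i, n i × n i` index the entries of `M` whose row and column have
the same colour. -/
theorem map_eq_sum_of_apply_eq_zero (φ : WordMatrix κ n R →ₗ[R] R) {M : WordMatrix κ n R}
    (hM : ∀ p q, Sigma.fst ∘ p ≠ Sigma.fst ∘ q → M p q = 0) :
    φ M = ∑ u : κ → Σ i, n i × n i,
      φ (single (fun k => ⟨(u k).1, (u k).2.1⟩) (fun k => ⟨(u k).1, (u k).2.2⟩) 1) *
        M (fun k => ⟨(u k).1, (u k).2.1⟩) (fun k => ⟨(u k).1, (u k).2.2⟩) := by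
  have hφ : φ M = ∑ pq : (κ → Σ i, n i) × (κ → Σ i, n i),
      φ (single pq.1 pq.2 1) * M pq.1 pq.2 := by
    conv_lhs => rw [matrix_eq_sum_single M]
    simp only [map_sum, Fintype.sum_prod_type]
    refine Finset.sum_congr rfl fun p _ => Finset.sum_congr rfl fun q _ => ?_
    rw [← mul_one (M p q), ← smul_eq_mul, ← smul_single, map_smul, smul_eq_mul, smul_eq_mul,
      mul_one, mul_comm]
  rw [hφ]
  refine (Fintype.sum_of_injective (fun u : κ → Σ i, n i × n i =>
      ((fun k => ⟨(u k).1, (u k).2.1⟩ : κ → Σ i, n i),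
        (fun k => ⟨(u k).1, (u k).2.2⟩ : κ → Σ i, n i)))
    (fun u v huv => funext fun k => ?_) _ _ (fun pq hpq => ?_) fun u => rfl).symm
  · have h₁ := congrFun (congrArg Prod.fst huv) k
    have h₂ := congrFun (congrArg Prod.snd huv) k
    grind
  · rw [hM, mul_zero]
    refine mt (fun h => ?_) hpq
    have hword : ∀ p q : Σ i, n i, p.1 = q.1 →
        ∃ s : Σ i, n i × n i, (⟨s.1, s.2.1⟩ : Σ i, n i) = p ∧ (⟨s.1, s.2.2⟩ : Σ i, n i) = q := by
      rintro ⟨i, r⟩ ⟨_, s⟩ rfl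
      exact ⟨⟨i, r, s⟩, rfl, rfl⟩
    choose u hu₁ hu₂ using fun k => hword _ _ (congrFun h k)
    exact ⟨u, Prod.ext (funext hu₁) (funext hu₂)⟩

end CommSemiring

variable {F : Type*} [Field F]

variable (n F) in
/-- The block diagonal embedding of `∏ᵢ GL (n i)` in the general linear group of `⨁ᵢ F^(n i)`. -/
def blockGL : (∀ i, GL (n i) F) →* GL (Σ i, n i) F :=
  (Units.map (blockDiagonal'RingHom n F).toMonoidHom).comp MulEquiv.piUnits.symm.toMonoidHom

@[simp]
theorem coe_blockGL (g : ∀ i, GL (n i) F) :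
    (blockGL n F g : Matrix (Σ i, n i) (Σ i, n i) F) = blockDiagonal' fun i => (g i).1 := rfl

theorem exists_blockGL_eq_transpose (g : ∀ i, GL (n i) F) :
    ∃ g', (blockGL n F g').1 = (blockGL n F g).1ᵀ := by
  choose g' hg' using fun i => (isUnit_transpose (g i).1).2 (g i).isUnit
  refine ⟨g', ?_⟩
  rw [coe_blockGL, coe_blockGL, blockDiagonal'_transpose]
  exact congrArg _ (funext hg')

theorem mem_span_tensorPow_blockGL [Infinite F] {b : WordMatrix κ n F}
    (hb : ∀ a ∈ colorPermAlgebra κ n F, Commute a b) :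
    b ∈ Submodule.span F (Set.range fun g => tensorPow κ (blockGL n F g).1) := by
  by_contra hb'
  obtain ⟨φ, hφb, hφ⟩ := Submodule.exists_le_ker_of_notMem hb'
  have hb₀ (p q : κ → Σ i, n i) := apply_eq_zero_of_commute_colorPermAlgebra hb (p := p) (q := q)
  refine hφb ((map_eq_sum_of_apply_eq_zero φ hb₀).trans <| sum_mul_eq_zero_of_symmetric
    (D := Set.range fun (g : ∀ i, GL (n i) F) (s : Σ i, n i × n i) => (g s.1).1 s.2.1 s.2.2)
    (fun P hP => eq_zero_of_eval_GL_eq_zero fun g => hP _ ⟨g, rfl⟩)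
    (fun u σ => apply_comp_of_commute_colorPermAlgebra hb σ
      (p := fun k => ⟨_, (u k).2.1⟩) (q := fun k => ⟨_, (u k).2.2⟩) rfl) ?_)
  rintro _ ⟨g, rfl⟩
  have hg : φ (tensorPow κ (blockGL n F g).1) = 0 := hφ (Submodule.subset_span ⟨g, rfl⟩)
  rw [map_eq_sum_of_apply_eq_zero φ fun p q hpq => ?_] at hg
  · simpa using hg
  · obtain ⟨k, hk⟩ := Function.ne_iff.1 hpq
    exact Finset.prod_eq_zero (Finset.mem_univ k) (blockDiagonal'_apply_ne _ _ _ hk)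

/-- Schur–Weyl duality for `∏ᵢ GL (n i)` acting on `(⨁ᵢ F^(n i))^{⊗κ}`. -/
theorem mem_colorPermAlgebra_of_commute [LinearOrder F] [IsStrictOrderedRing F]
    {C : WordMatrix κ n F} (hC : ∀ g, Commute (tensorPow κ (blockGL n F g).1) C) :
    C ∈ colorPermAlgebra κ n F := by
  refine centralizer_centralizer_le_of_transpose_mem
    (fun a => transpose_mem_colorPermAlgebra) fun b hb => ?_
  have hspan : Submodule.span F (Set.range fun g => tensorPow κ (blockGL n F g).1) ≤
      Subalgebra.toSubmodule (Subalgebra.centralizer F {C}) := by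
    refine Submodule.span_le.2 (Set.range_subset_iff.2 fun g => ?_)
    rintro _ rfl
    exact (hC g).symm
  exact (hspan (mem_span_tensorPow_blockGL hb) C rfl).symm

end SchurWeyl

section Word

open MvPolynomial

theorem toSubmodule_range_aeval {R A X : Type*} [CommSemiring R] [CommSemiring A] [Algebra R A]
    (x : X → A) : Subalgebra.toSubmodule (aeval (R := R) x).range =
      Submodule.span R (Set.range fun w : Σ d, Fin d → X => ∏ k, x (w.2 k)) := by
  rw [← Algebra.adjoin_range_eq_range_aeval, Algebra.adjoin_eq_span, ← FreeMonoid.mrange_lift,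
    MonoidHom.coe_mrange]
  refine congrArg _ (List.equivSigmaTuple.symm.surjective.range_comp
    (fun l => FreeMonoid.lift x (FreeMonoid.ofList l)) |>.symm.trans ?_)
  refine congrArg _ (funext fun w => ?_)
  simp [FreeMonoid.lift_apply, List.equivSigmaTuple, List.map_ofFn, List.prod_ofFn]

variable {R T : Type*} [CommSemiring R] [Fintype T] [DecidableEq T]

theorem list_prod_ofFn_apply (n : ℕ) (M : Fin (n + 1) → Matrix T T R) (p q : T) :
    (List.ofFn M).prod p q = ∑ c : Fin n → T, ∏ i : Fin (n + 1),
      M i ((Fin.cons p c : Fin (n + 1) → T) i) ((Fin.snoc c q : Fin (n + 1) → T) i) := by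
  induction n generalizing p with
  | zero => simp [Fin.snoc]
  | succ n ih =>
    rw [List.ofFn_succ, List.prod_cons, mul_apply, ← (Fin.consEquiv fun _ => T).sum_comp,
      Fintype.sum_prod_type]
    refine Finset.sum_congr rfl fun t _ => ?_
    rw [ih, Finset.mul_sum]
    refine Finset.sum_congr rfl fun c _ => ?_
    rw [Fin.prod_univ_succ (n := n + 1)]
    simp only [Fin.consEquiv, Equiv.coe_fn_mk, ← Fin.cons_snoc_eq_snoc_cons, Fin.cons_zero,
      Fin.cons_succ]

theorem trace_list_prod_ofFn (n : ℕ) (M : Fin (n + 1) → Matrix T T R) :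
    (List.ofFn M).prod.trace = ∑ c : Fin (n + 1) → T, ∏ i, M i (c i) (c (i + 1)) := by
  rw [← (Fin.consEquiv fun _ => T).sum_comp, Fintype.sum_prod_type, Matrix.trace]
  refine Finset.sum_congr rfl fun t _ => ?_
  rw [diag_apply, list_prod_ofFn_apply]
  refine Finset.sum_congr rfl fun c _ => Finset.prod_congr rfl fun i _ => ?_
  rw [Fin.snoc_eq_cons_rotate]
  exact congrArg (fun j => M i _ ((Fin.cons t c : Fin (n + 1) → T) j)) (finRotate_apply i)

theorem exists_list_prod_ofFn_of_mem_closure {A M : Type*} [Monoid M] {f : A → M} {X : M}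
    (hX : X ∈ Subsemigroup.closure (Set.range f)) :
    ∃ (n : ℕ) (a : Fin (n + 1) → A), (List.ofFn fun i => f (a i)).prod = X := by
  suffices ∃ l : List A, l ≠ [] ∧ (l.map f).prod = X by
    obtain ⟨_ | ⟨a, l⟩, hl, rfl⟩ := this
    · exact absurd rfl hl
    · refine ⟨l.length, (a :: l).get, congrArg _ ?_⟩
      exact List.map_ofFn.symm.trans (congrArg _ (List.ofFn_get _))
  induction hX using Subsemigroup.closure_induction with
  | mem x hx =>
    obtain ⟨a, rfl⟩ := hx
    exact ⟨[a], by simp⟩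
  | mul x y _ _ hx hy =>
    obtain ⟨l, hl, rfl⟩ := hx
    obtain ⟨l', -, rfl⟩ := hy
    exact ⟨l ++ l', by simp [hl]⟩

end Word

section Contract

variable {F R κ T : Type*} [CommSemiring F] [CommSemiring R] [Algebra F R] [Fintype κ]
  [DecidableEq κ] [Fintype T]

/-- The functional `D ↦ tr (D ⨂ₖ Y k)` on matrices over `F`, for matrices `Y k` over an
`F`-algebra. -/
def contract (F : Type*) [CommSemiring F] [Algebra F R] (Y : κ → Matrix T T R) :
    Matrix (κ → T) (κ → T) F →ₗ[F] R :=
  traceLinearMap (κ → T) F R ∘ₗ LinearMap.mulRight F (tensorProd Y) ∘ₗ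
    (Algebra.linearMap F R).mapMatrix

theorem contract_apply (Y : κ → Matrix T T R) (D : Matrix (κ → T) (κ → T) F) :
    contract F Y D = (D.map (algebraMap F R) * tensorProd Y).trace := rfl

theorem contract_single [DecidableEq T] (Y : κ → Matrix T T R) (p q : κ → T) :
    contract F Y (single q p 1) = ∏ k, Y k (p k) (q k) := by
  simp [contract_apply, trace_single_mul]

theorem contract_mul_mul [DecidableEq T] (Y : κ → Matrix T T R) (X X' : Matrix T T F)
    (D : Matrix (κ → T) (κ → T) F) :
    contract F Y (tensorPow κ X * D * tensorPow κ X') =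
      contract F (fun k => X'.map (algebraMap F R) * Y k * X.map (algebraMap F R)) D := by
  have hX (X : Matrix T T F) : (tensorPow κ X).map (algebraMap F R) =
      tensorPow κ (X.map (algebraMap F R)) := tensorProd_map _ _
  have hY : tensorProd (fun k => X'.map (algebraMap F R) * Y k * X.map (algebraMap F R)) =
      tensorPow κ (X'.map (algebraMap F R)) * tensorProd Y *
        tensorPow κ (X.map (algebraMap F R)) := by
    rw [tensorPow_apply, tensorPow_apply, ← tensorProd_mul, ← tensorProd_mul]
    rfl
  rw [contract_apply, contract_apply, Matrix.map_mul, Matrix.map_mul, hX, hX, hY,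
    mul_assoc, mul_assoc, trace_mul_comm, mul_assoc, mul_assoc]

theorem contract_colorPerm {I : Type*} {n : I → Type*} [DecidableEq I] [Fintype I]
    [∀ i, Fintype (n i)] [∀ i, DecidableEq (n i)]
    {Y : κ → Matrix (Σ i, n i) (Σ i, n i) R} {e : κ → I}
    (hY : ∀ k p q, q.1 ≠ e k → Y k p q = 0) (σ : Equiv.Perm κ) (c : κ → I) :
    contract F Y (colorPerm σ c) = if c = e then permTrace σ Y else 0 := by
  have hmap : (colorPerm σ c : WordMatrix κ n F).map (algebraMap F R) = colorPerm σ c := by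
    ext p q
    simp only [map_apply, colorPerm, of_apply, apply_ite (algebraMap F R), map_one, map_zero]
  have hprod (p : κ → Σ i, n i) (hp : Sigma.fst ∘ p ≠ e) : ∏ k, Y k (p (σ k)) (p k) = 0 := by
    obtain ⟨k, hk⟩ := Function.ne_iff.1 hp
    exact Finset.prod_eq_zero (Finset.mem_univ k) (hY k _ _ hk)
  rw [contract_apply, hmap, trace_colorPerm_mul_tensorProd]
  split_ifs with hc
  · refine Finset.sum_congr rfl fun p _ => ?_
    split_ifs with hp
    · rfl
    · exact (hprod p (hc ▸ hp)).symm
  · refine Finset.sum_eq_zero fun p _ => ?_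
    split_ifs with hp
    · exact hprod p (hp.trans_ne hc)
    · rfl

end Contract

section CommuteLift

variable {ι : Type*} {J : ι → Type*} [∀ m, Fintype (J m)] {F : Type*} [Field F]

/-- The simultaneous conjugation `D ↦ X D X⁻¹`. -/
def conjEnd [∀ m, DecidableEq (J m)] (X : ∀ m, GL (J m) F) :
    Module.End F (∀ m, Matrix (J m) (J m) F) :=
  LinearMap.pi fun m => LinearMap.mulLeftRight F ((X m).1, (X m)⁻¹.1) ∘ₗ LinearMap.proj m

theorem conjEnd_apply [∀ m, DecidableEq (J m)] (X : ∀ m, GL (J m) F)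
    (D : ∀ m, Matrix (J m) (J m) F) (m : ι) :
    conjEnd X D m = (X m).1 * D m * (X m)⁻¹.1 := rfl

section TraceForm

variable [Fintype ι]

variable (J F) in
/-- The bilinear form `∑ₘ tr ((C m)ᵀ D m)`. -/
def traceTransposeForm : LinearMap.BilinForm F (∀ m, Matrix (J m) (J m) F) :=
  LinearMap.mk₂ F (fun C D => ∑ m, ((C m)ᵀ * D m).trace)
    (fun C C' D => by simp [add_mul, Finset.sum_add_distrib])
    (fun c C D => by simp [Finset.mul_sum])
    (fun C D D' => by simp [mul_add, Finset.sum_add_distrib])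
    (fun c C D => by simp [Finset.mul_sum])

theorem traceTransposeForm_apply (C D : ∀ m, Matrix (J m) (J m) F) :
    traceTransposeForm J F C D = ∑ m, vec (C m) ⬝ᵥ vec (D m) := by
  simp only [vec_dotProduct_vec]
  rfl

theorem isRefl_traceTransposeForm : (traceTransposeForm J F).IsRefl := fun C D h => by
  rw [traceTransposeForm_apply] at h ⊢
  simpa only [dotProduct_comm] using h

theorem eq_zero_of_traceTransposeForm_self [LinearOrder F] [IsStrictOrderedRing F]
    {C : ∀ m, Matrix (J m) (J m) F} (hC : traceTransposeForm J F C C = 0) : C = 0 := by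
  have hnonneg (m : ι) : 0 ≤ vec (C m) ⬝ᵥ vec (C m) :=
    Finset.sum_nonneg fun _ _ => mul_self_nonneg _
  rw [traceTransposeForm_apply, Fintype.sum_eq_zero_iff_of_nonneg hnonneg] at hC
  exact funext fun m => vec_eq_zero_iff.1 (dotProduct_self_eq_zero.1 (congrFun hC m))

theorem isAdjointPair_conjEnd [∀ m, DecidableEq (J m)] {X X' : ∀ m, GL (J m) F}
    (hX : ∀ m, (X' m).1 = (X m).1ᵀ) :
    LinearMap.IsAdjointPair (traceTransposeForm J F) (traceTransposeForm J F)
      (conjEnd X') (conjEnd X) := by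
  intro C D
  refine Finset.sum_congr rfl fun m _ => ?_
  have hinv : (X' m)⁻¹.1 = (X m)⁻¹.1ᵀ := by
    rw [coe_units_inv, coe_units_inv, hX, transpose_nonsing_inv]
  rw [conjEnd_apply, conjEnd_apply, hX, hinv]
  simp only [transpose_mul, transpose_transpose]
  rw [mul_assoc, trace_mul_comm]
  simp only [mul_assoc]

end TraceForm

theorem exists_commute_lift [Finite ι] [∀ m, DecidableEq (J m)] [LinearOrder F]
    [IsStrictOrderedRing F] {G W : Type*} [AddCommGroup W] [Module F W] {X : G → ∀ m, GL (J m) F}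
    (hX : ∀ g, ∃ g', ∀ m, (X g' m).1 = (X g m).1ᵀ)
    (Φ : (∀ m, Matrix (J m) (J m) F) →ₗ[F] W)
    (hker : ∀ g, ∀ D ∈ LinearMap.ker Φ, conjEnd (X g) D ∈ LinearMap.ker Φ)
    {D : ∀ m, Matrix (J m) (J m) F} (hD : ∀ g, Φ (conjEnd (X g) D) = Φ D) :
    ∃ D', Φ D' = Φ D ∧ ∀ g m, Commute (X g m).1 (D' m) := by
  cases nonempty_fintype ι
  obtain ⟨D', hΦ, hfix⟩ := exists_fixed_lift isRefl_traceTransposeForm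
    (fun _ => eq_zero_of_traceTransposeForm_self) (fun g => conjEnd (X g))
    (fun g => (hX g).imp fun _ => isAdjointPair_conjEnd) Φ hker hD
  refine ⟨D', hΦ, fun g m => ?_⟩
  exact (Units.mul_inv_eq_iff_eq_mul _).1 (congrFun (hfix g) m)

end CommuteLift

section Block

variable {I : Type*} {n : I → Type*} [DecidableEq I] [∀ i, DecidableEq (n i)] {R : Type*}

variable (n R) in
/-- The inclusion of the `i`-th block `R^(n i)` in `⨁ᵢ R^(n i)`. -/
def blockIncl [Zero R] [One R] (i : I) : Matrix (Σ i, n i) (n i) R :=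
  (1 : Matrix (Σ i, n i) (Σ i, n i) R).submatrix id (Sigma.mk i)

theorem blockIncl_apply_eq [Zero R] [One R] (i : I) (r s : n i) :
    blockIncl n R i ⟨i, r⟩ s = (1 : Matrix (n i) (n i) R) r s := by
  simp [blockIncl, one_apply]

theorem blockIncl_apply_ne [Zero R] [One R] {i : I} {p : Σ i, n i} (hp : p.1 ≠ i) (s : n i) :
    blockIncl n R i p s = 0 :=
  one_apply_ne fun h => hp (congrArg Sigma.fst h)

variable [∀ i, Fintype (n i)] [CommSemiring R]

theorem blockDiagonal'_mul_blockIncl [Fintype I] (D : ∀ i, Matrix (n i) (n i) R) (i : I) :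
    blockDiagonal' D * blockIncl n R i = blockIncl n R i * D i := by
  ext ⟨j, r⟩ s
  simp only [blockIncl, mul_apply, submatrix_apply, id_eq, one_apply, mul_ite, mul_one, mul_zero,
    Finset.sum_ite_eq', Finset.mem_univ, if_true, ite_mul, one_mul, zero_mul]
  obtain rfl | hj := eq_or_ne j i
  · simp
  · simp [hj, blockDiagonal'_apply_ne]

theorem blockIncl_transpose_mul_blockDiagonal' [Fintype I] (D : ∀ i, Matrix (n i) (n i) R)
    (i : I) : (blockIncl n R i)ᵀ * blockDiagonal' D = D i * (blockIncl n R i)ᵀ := by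
  rw [← transpose_transpose (_ * blockDiagonal' D), transpose_mul, blockDiagonal'_transpose,
    transpose_transpose, blockDiagonal'_mul_blockIncl, transpose_mul, transpose_transpose]

end Block

end InvariantTheory

namespace FinQuiver

open InvariantTheory Matrix

variable {Q : FinQuiver} {K : Type} [Field K] {α : Q.I → ℕ}

/-- The map `x a` of a representation as an endomorphism of the total space `⨁ᵢ K^(α i)`. -/
def arrowMatrix (x : Q.Rep K α) (a : Q.DA) :
    Matrix (Σ i, Fin (α i)) (Σ i, Fin (α i)) K :=
  blockIncl (fun i => Fin (α i)) K (Q.dh a) * x a * (blockIncl (fun i => Fin (α i)) K (Q.dt a))ᵀ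

theorem arrowMatrix_apply (x : Q.Rep K α) (a : Q.DA) (r : Fin (α (Q.dh a)))
    (s : Fin (α (Q.dt a))) : arrowMatrix x a ⟨Q.dh a, r⟩ ⟨Q.dt a, s⟩ = x a r s := by
  simp only [arrowMatrix, mul_apply, transpose_apply, blockIncl_apply_eq, one_apply, ite_mul,
    one_mul, zero_mul, Finset.sum_ite_eq, Finset.mem_univ, if_true, mul_ite, mul_one, mul_zero]

theorem arrowMatrix_eq_zero_of_head_ne (x : Q.Rep K α) {a : Q.DA} {p : Σ i, Fin (α i)}
    (hp : p.1 ≠ Q.dh a) (q : Σ i, Fin (α i)) : arrowMatrix x a p q = 0 := by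
  simp only [arrowMatrix, mul_apply, blockIncl_apply_ne hp, zero_mul, Finset.sum_const_zero]

theorem arrowMatrix_eq_zero_of_tail_ne (x : Q.Rep K α) {a : Q.DA} (p : Σ i, Fin (α i))
    {q : Σ i, Fin (α i)} (hq : q.1 ≠ Q.dt a) : arrowMatrix x a p q = 0 := by
  simp only [arrowMatrix, mul_apply, transpose_apply, blockIncl_apply_ne hq, mul_zero,
    Finset.sum_const_zero]

theorem arrowMatrix_glAct (g : ∀ i, GL (Fin (α i)) K) (x : Q.Rep K α) (a : Q.DA) :
    arrowMatrix (Q.glAct K α g x) a =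
      (blockGL _ K g).1 * arrowMatrix x a * (blockGL _ K g)⁻¹.1 := by
  rw [← map_inv, coe_blockGL, coe_blockGL]
  simp only [arrowMatrix, glAct, ← Matrix.mul_assoc, blockDiagonal'_mul_blockIncl]
  simp only [Matrix.mul_assoc, blockIncl_transpose_mul_blockDiagonal']
  rfl

theorem trace_list_prod_arrowMatrix_glAct (g : ∀ i, GL (Fin (α i)) K) (x : Q.Rep K α)
    (l : List Q.DA) : (l.map (arrowMatrix (Q.glAct K α g x))).prod.trace =
      (l.map (arrowMatrix x)).prod.trace := by
  have hconj : (l.map (arrowMatrix (Q.glAct K α g x))).prod =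
      (blockGL _ K g).1 * (l.map (arrowMatrix x)).prod * (blockGL _ K g)⁻¹.1 := by
    have h := List.smul_prod' (r := ConjAct.toConjAct (blockGL _ K g))
      (l := l.map (arrowMatrix x))
    simp only [ConjAct.units_smul_def, ConjAct.ofConjAct_toConjAct, List.map_map] at h
    rw [h]
    exact congrArg _ (List.map_congr_left fun a _ => arrowMatrix_glAct g x a)
  rw [hconj, trace_units_conj]

theorem cycTr_eq_trace (p : Q.Cyc) (x : Q.Rep K α) :
    Q.cycTr K α p x = (List.ofFn fun i => arrowMatrix x (p.ar i)).prod.trace := by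
  have hcast : ∀ {i j : Q.I} (h : i = j) (s : Fin (α j)),
      (⟨j, s⟩ : Σ i, Fin (α i)) = ⟨i, Fin.cast (congrArg α h).symm s⟩ := by
    rintro i _ rfl s
    rfl
  let e (c : ∀ i, Fin (α (Q.dh (p.ar i)))) (i : Fin (p.n + 1)) : Σ i, Fin (α i) := ⟨_, c i⟩
  have he : Function.Injective e := fun c c' h =>
    funext fun i => sigma_mk_injective (β := fun i => Fin (α i)) (congrFun h i)
  rw [trace_list_prod_ofFn, cycTr]
  refine Fintype.sum_of_injective e he _ _ (fun c hc => ?_)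
    fun c => Finset.prod_congr rfl fun i _ => ?_
  · obtain ⟨i, hi⟩ : ∃ i, (c i).1 ≠ Q.dh (p.ar i) := by
      contrapose! hc
      exact ⟨fun i => Fin.cast (congrArg α (hc i)) (c i).2,
        funext fun i => (hcast (hc i).symm (c i).2).symm⟩
    exact Finset.prod_eq_zero (Finset.mem_univ i) (arrowMatrix_eq_zero_of_head_ne x hi _)
  · exact (arrowMatrix_apply x _ _ _).symm.trans
      (congrArg (arrowMatrix x _ (e c i)) (hcast (p.compat i) _).symm)

theorem trace_list_prod_arrowMatrix_eq_zero {n : ℕ} {a : Fin (n + 1) → Q.DA}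
    (ha : ¬∀ i, Q.dt (a i) = Q.dh (a (i + 1))) (x : Q.Rep K α) :
    (List.ofFn fun i => arrowMatrix x (a i)).prod.trace = 0 := by
  obtain ⟨i, hi⟩ := not_forall.1 ha
  rw [trace_list_prod_ofFn]
  refine Finset.sum_eq_zero fun c _ => ?_
  by_cases hc : (c (i + 1)).1 = Q.dh (a (i + 1))
  · refine Finset.prod_eq_zero (Finset.mem_univ i) (arrowMatrix_eq_zero_of_tail_ne x _ ?_)
    rw [hc]
    exact Ne.symm hi
  · exact Finset.prod_eq_zero (Finset.mem_univ (i + 1)) (arrowMatrix_eq_zero_of_head_ne x hc _)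

theorem cycTr_glAct (p : Q.Cyc) (g : Q.Gl K α) (x : Q.Rep K α) :
    Q.cycTr K α p (Q.glAct K α g x) = Q.cycTr K α p x := by
  have hlist (y : Q.Rep K α) : Q.cycTr K α p y =
      ((List.ofFn p.ar).map (arrowMatrix y)).prod.trace := by
    rw [cycTr_eq_trace, List.map_ofFn]
    rfl
  rw [hlist, hlist]
  exact trace_list_prod_arrowMatrix_glAct g x _

theorem cycTr_mem_fnRing (p : Q.Cyc) (V : Set (Q.Rep K α)) :
    (fun x : V => Q.cycTr K α p x.1) ∈ Q.fnRing K α V := by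
  have hsum : (fun x : V => Q.cycTr K α p x.1) =
      ∑ c : ∀ i : Fin (p.n + 1), Fin (α (Q.dh (p.ar i))), ∏ i, fun x : V =>
        x.1 (p.ar i) (c i) (Fin.cast (congrArg α (p.compat i)).symm (c (i + 1))) := by
    ext x
    simp only [cycTr, Finset.sum_apply, Finset.prod_apply]
  rw [hsum]
  exact sum_mem fun c _ => prod_mem fun i _ =>
    ⟨MvPolynomial.X ⟨p.ar i, c i, _⟩, MvPolynomial.aeval_X _ _⟩

theorem moment_glAct (g : Q.Gl K α) (x : Q.Rep K α) (i : Q.I) :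
    Q.moment K α (Q.glAct K α g x) i =
      (g i).1 * Q.moment K α x i * ((g i)⁻¹ : GL (Fin (α i)) K).1 := by
  have hconj : ∀ {j : Q.I} (h : j = i) (M : Matrix (Fin (α j)) (Fin (α j)) K),
      ((g j).1 * M * ((g j)⁻¹ : GL (Fin (α j)) K).1).submatrix
          (Fin.cast (congrArg α h).symm) (Fin.cast (congrArg α h).symm) =
        (g i).1 * M.submatrix (Fin.cast (congrArg α h).symm) (Fin.cast (congrArg α h).symm) *
          ((g i)⁻¹ : GL (Fin (α i)) K).1 := by
    rintro _ rfl M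
    rfl
  have hmul {j k : Q.I} (M : Matrix (Fin (α j)) (Fin (α k)) K)
      (N : Matrix (Fin (α k)) (Fin (α j)) K) :
      (g j).1 * M * ((g k)⁻¹ : GL (Fin (α k)) K).1 *
          ((g k).1 * N * ((g j)⁻¹ : GL (Fin (α j)) K).1) =
        (g j).1 * (M * N) * ((g j)⁻¹ : GL (Fin (α j)) K).1 := by
    simp only [Matrix.mul_assoc]
    rw [← Matrix.mul_assoc ((g k)⁻¹ : GL (Fin (α k)) K).1, Units.inv_mul, Matrix.one_mul]
  simp only [moment, mul_sub, sub_mul, Finset.mul_sum, Finset.sum_mul, mul_dite, dite_mul,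
    mul_zero, zero_mul]
  refine congrArg₂ _ ?_ ?_ <;> refine Finset.sum_congr rfl fun a _ => ?_ <;> split_ifs with h
  · rw [← hconj h, ← hmul]
    rfl
  · rfl
  · rw [← hconj h, ← hmul]
    rfl
  · rfl

theorem glAct_mem_momentFiber {l : Q.I → K} {x : Q.Rep K α} (hx : x ∈ Q.MomentFiber K l α)
    (g : Q.Gl K α) : Q.glAct K α g x ∈ Q.MomentFiber K l α := fun i => by
  rw [moment_glAct, hx i, Matrix.mul_smul, Matrix.mul_one, Matrix.smul_mul, Units.mul_inv]

section ArrowContract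

variable {κ : Type*} [Fintype κ] [DecidableEq κ]

/-- The functional `D ↦ tr (D ⨂ₖ x (a k))` on `ℚ`-matrices, as a function of the
representation `x ∈ V`. -/
def arrowContract [CharZero K] (V : Set (Q.Rep K α)) (a : κ → Q.DA) :
    WordMatrix κ (fun i => Fin (α i)) ℚ →ₗ[ℚ] (V → K) :=
  LinearMap.pi fun x => contract ℚ fun k => arrowMatrix x.1 (a k)

theorem arrowContract_apply [CharZero K] {V : Set (Q.Rep K α)} (a : κ → Q.DA)
    (D : WordMatrix κ (fun i => Fin (α i)) ℚ) (x : V) :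
    arrowContract V a D x = contract ℚ (fun k => arrowMatrix x.1 (a k)) D := rfl

/-- The map `x a` of a representation `x`, as a matrix of functions of `x ∈ V`. -/
def genericArrow (V : Set (Q.Rep K α)) (a : Q.DA) :
    Matrix (Σ i, Fin (α i)) (Σ i, Fin (α i)) (V → K) :=
  of fun p q x => arrowMatrix x.1 a p q

/-- The algebra of functions on `V` generated by the trace functions of oriented cycles. -/
def traceAlgebra (V : Set (Q.Rep K α)) : Subalgebra K (V → K) :=
  Algebra.adjoin K {f : V → K | ∃ p : Q.Cyc, f = fun x => Q.cycTr K α p x.1}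

variable {V : Set (Q.Rep K α)}

theorem trace_mem_traceAlgebra {M : Matrix (Σ i, Fin (α i)) (Σ i, Fin (α i)) (V → K)}
    (hM : M ∈ Subsemigroup.closure (Set.range (genericArrow V))) :
    M.trace ∈ traceAlgebra V := by
  obtain ⟨n, a, rfl⟩ := exists_list_prod_ofFn_of_mem_closure hM
  have htrace : (List.ofFn fun i => genericArrow V (a i)).prod.trace =
      fun x : V => (List.ofFn fun i => arrowMatrix x.1 (a i)).prod.trace := by
    ext x
    simp only [trace_list_prod_ofFn, Finset.sum_apply, Finset.prod_apply, genericArrow, of_apply]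
  rw [htrace]
  by_cases ha : ∀ i, Q.dt (a i) = Q.dh (a (i + 1))
  · exact Algebra.subset_adjoin ⟨⟨n, a, ha⟩, funext fun x => (cycTr_eq_trace ⟨n, a, ha⟩ x.1).symm⟩
  · simp only [trace_list_prod_arrowMatrix_eq_zero ha]
    exact zero_mem _

variable [CharZero K]

theorem arrowContract_colorPerm (a : κ → Q.DA) (σ : Equiv.Perm κ) (c : κ → Q.I) :
    arrowContract V a (colorPerm σ c) =
      if c = Q.dt ∘ a then permTrace σ fun k => genericArrow V (a k) else 0 := by
  ext x
  have hx (k : κ) (p q : Σ i, Fin (α i)) (hq : q.1 ≠ (Q.dt ∘ a) k) :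
      arrowMatrix x.1 (a k) p q = 0 := arrowMatrix_eq_zero_of_tail_ne x.1 p hq
  rw [arrowContract_apply, contract_colorPerm hx]
  split_ifs
  · simp only [permTrace, Finset.sum_apply, Finset.prod_apply, genericArrow, of_apply]
  · rfl

theorem arrowContract_mem_traceAlgebra (a : κ → Q.DA)
    {D : WordMatrix κ (fun i => Fin (α i)) ℚ}
    (hD : D ∈ colorPermAlgebra κ (fun i => Fin (α i)) ℚ) :
    arrowContract V a D ∈ traceAlgebra V := by
  refine colorPermAlgebra_le (N := ((Subalgebra.toSubmodule (traceAlgebra V)).restrictScalars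
    ℚ).comap (arrowContract V a)) (fun σ c => ?_) hD
  change arrowContract V a (colorPerm σ c) ∈ traceAlgebra V
  rw [arrowContract_colorPerm]
  split_ifs
  · exact permTrace_mem (S := (traceAlgebra V).toSubmonoid)
      (fun _ => trace_mem_traceAlgebra) σ
      fun k => Subsemigroup.subset_closure ⟨a k, rfl⟩
  · exact zero_mem _

theorem contract_arrowMatrix_conj (g : ∀ i, GL (Fin (α i)) ℚ) (x : Q.Rep K α) (a : κ → Q.DA)
    (D : WordMatrix κ (fun i => Fin (α i)) ℚ) :
    contract ℚ (fun k => arrowMatrix x (a k)) (tensorPow κ (blockGL _ ℚ g).1 * D *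
        tensorPow κ (blockGL _ ℚ g)⁻¹.1) =
      contract ℚ (fun k => arrowMatrix
        (Q.glAct K α (fun i => GeneralLinearGroup.map (algebraMap ℚ K) (g i)⁻¹) x) (a k)) D := by
  have hmap (g : ∀ i, GL (Fin (α i)) ℚ) : (blockGL _ ℚ g).1.map (algebraMap ℚ K) =
      (blockGL _ K fun i => GeneralLinearGroup.map (algebraMap ℚ K) (g i)).1 :=
    blockDiagonal'_map _ _ (map_zero _)
  rw [contract_mul_mul]
  refine congrArg (contract ℚ · D) (funext fun k => ?_)
  rw [arrowMatrix_glAct, ← map_inv (blockGL _ ℚ), hmap, hmap, ← map_inv (blockGL _ K)]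
  congr 4

theorem arrowContract_single {d : ℕ} (w : Fin d → Q.Coords α) (x : V) :
    arrowContract V (fun k => (w k).1) (single (fun k => ⟨Q.dt (w k).1, (w k).2.2⟩)
      (fun k => ⟨Q.dh (w k).1, (w k).2.1⟩) 1) x = ∏ k, x.1 (w k).1 (w k).2.1 (w k).2.2 := by
  rw [arrowContract_apply, contract_single]
  exact Finset.prod_congr rfl fun k _ => arrowMatrix_apply x.1 _ _ _

end ArrowContract

section Invariants

variable [CharZero K] {V : Set (Q.Rep K α)} {ι : Type*} [Fintype ι]

/-- The functions on `V` obtained by contracting a family of `ℚ`-matrices `D m` along the words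
of arrows `a m` and taking the linear combination with coefficients `c m`. -/
def arrowContractSum (V : Set (Q.Rep K α)) (a : ι → Σ d, Fin d → Q.DA) (c : ι → K) :
    (∀ m, WordMatrix (Fin (a m).1) (fun i => Fin (α i)) ℚ) →ₗ[ℚ] (V → K) :=
  ∑ m, c m • arrowContract V (a m).2 ∘ₗ LinearMap.proj m

theorem arrowContractSum_apply (a : ι → Σ d, Fin d → Q.DA) (c : ι → K)
    (D : ∀ m, WordMatrix (Fin (a m).1) (fun i => Fin (α i)) ℚ) :
    arrowContractSum V a c D = ∑ m, c m • arrowContract V (a m).2 (D m) := by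
  simp [arrowContractSum, LinearMap.sum_apply]

theorem exists_arrowContractSum_eq {f : V → K} (hf : f ∈ Q.fnRing K α V) :
    ∃ (s : Finset (Σ d, Fin d → Q.Coords α)) (a : s → Σ d, Fin d → Q.DA) (c : s → K)
      (D : ∀ m, WordMatrix (Fin (a m).1) (fun i => Fin (α i)) ℚ),
      arrowContractSum V a c D = f := by
  rw [← Subalgebra.mem_toSubmodule, fnRing, toSubmodule_range_aeval,
    Finsupp.mem_span_range_iff_exists_finsupp] at hf
  obtain ⟨c, rfl⟩ := hf
  refine ⟨c.support, fun w => ⟨w.1.1, fun k => (w.1.2 k).1⟩, fun w => c w, fun w =>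
    single (fun k => ⟨Q.dt (w.1.2 k).1, (w.1.2 k).2.2⟩)
      (fun k => ⟨Q.dh (w.1.2 k).1, (w.1.2 k).2.1⟩) 1, ?_⟩
  rw [arrowContractSum_apply, Finsupp.sum, ← Finset.sum_coe_sort c.support]
  refine Finset.sum_congr rfl fun w _ => ?_
  congr 1
  ext x
  rw [arrowContract_single, Finset.prod_apply]

theorem arrowContractSum_conj (a : ι → Σ d, Fin d → Q.DA) (c : ι → K)
    (hV : ∀ g : Q.Gl K α, ∀ x ∈ V, Q.glAct K α g x ∈ V) (g : ∀ i, GL (Fin (α i)) ℚ) :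
    ∃ h : Q.Gl K α, ∀ D x, arrowContractSum V a c
      (conjEnd (fun m => Units.map (tensorPow (Fin (a m).1)) (blockGL _ ℚ g)) D) x =
        arrowContractSum V a c D ⟨Q.glAct K α h x.1, hV h x.1 x.2⟩ := by
  refine ⟨fun i => GeneralLinearGroup.map (algebraMap ℚ K) (g i)⁻¹, fun D x => ?_⟩
  simp only [arrowContractSum_apply, Finset.sum_apply, Pi.smul_apply, arrowContract_apply,
    conjEnd_apply]
  exact Finset.sum_congr rfl fun m _ => congrArg _ (contract_arrowMatrix_conj g x.1 _ _)

theorem mem_traceAlgebra_of_invariant (hV : ∀ g : Q.Gl K α, ∀ x ∈ V, Q.glAct K α g x ∈ V)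
    {f : V → K} (hf : f ∈ Q.fnRing K α V)
    (hinv : ∀ (g : Q.Gl K α) (x : V), f ⟨Q.glAct K α g x.1, hV g x.1 x.2⟩ = f x) :
    f ∈ traceAlgebra V := by
  obtain ⟨s, a, c, D, rfl⟩ := exists_arrowContractSum_eq hf
  obtain ⟨D', hD', hcomm⟩ := exists_commute_lift
    (fun g => (exists_blockGL_eq_transpose g).imp fun _ hg' m =>
      (congrArg (tensorPow (Fin (a m).1)) hg').trans (tensorProd_transpose _))
    (arrowContractSum V a c)
    (fun g E hE => by
      obtain ⟨h, hh⟩ := arrowContractSum_conj a c hV g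
      exact funext fun x => (hh E x).trans (congrFun hE _))
    (D := D) (fun g => by
      obtain ⟨h, hh⟩ := arrowContractSum_conj a c hV g
      exact funext fun x => (hh D x).trans (hinv h x))
  rw [← hD', arrowContractSum_apply]
  exact sum_mem fun m _ => Subalgebra.smul_mem _ (arrowContract_mem_traceAlgebra _
    (mem_colorPermAlgebra_of_commute fun g => hcomm g m)) _

end Invariants

end FinQuiver

theorem stmt9_general (Q : FinQuiver) (K : Type) [Field K] [CharZero K] (α : Q.I → ℕ)
    (V : Set (Q.Rep K α)) (hV : ∀ g : Q.Gl K α, ∀ x ∈ V, Q.glAct K α g x ∈ V) :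
    Q.fnRing K α V ⊓ relInv K (fun x y : V => ∃ g : Q.Gl K α, y.1 = Q.glAct K α g x.1) =
      Algebra.adjoin K {f : V → K | ∃ p : Q.Cyc, f = fun x => Q.cycTr K α p x.1} := by
  refine le_antisymm (fun f hf => ?_) (Algebra.adjoin_le ?_)
  · exact FinQuiver.mem_traceAlgebra_of_invariant hV hf.1 fun g x => (hf.2 x _ ⟨g, rfl⟩).symm
  · rintro _ ⟨p, rfl⟩
    exact ⟨FinQuiver.cycTr_mem_fnRing p V, fun x y ⟨g, hg⟩ =>
      (FinQuiver.cycTr_glAct p g x.1).symm.trans (congrArg _ hg.symm)⟩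

/-- the ring of invariants `K[μ_α^{-1}(λ)]^{G(α)}` is generated as a
`K`-algebra by the restrictions of the trace functions `tr_p` of oriented cycles
`p` in the double quiver `Q̄`. -/
theorem stmt9 (Q : FinQuiver) (K : Type) [Field K] [CharZero K] [IsAlgClosed K]
    (l : Q.I → K) (α : Q.I → ℕ) :
    Q.InvRing K l α = Algebra.adjoin K
      {f : ↥(Q.MomentFiber K l α) → K |
        ∃ p : Q.Cyc, f = fun x => Q.cycTr K α p x.1} :=
  stmt9_general Q K α (Q.MomentFiber K l α) fun g _ hx => FinQuiver.glAct_mem_momentFiber hx g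

end
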